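/- Let X be a finite free ℤ-module. For any complex number s and any finite set of characters, the following holds: if c ∈ ℂ is such that p^c is algebraic over ℚ for at least three distinct prime numbers p, then c ∈ ℚ. (Corollary of the six exponentials theorem.) -/

import Mathlib

open NumberField in
theorem aux_factor (s : Finset ℂ) : ∀ (f : ℂ → ℂ), Differentiable ℂ f → (∀ a ∈ s, f a = 0) →
    ∃ g : ℂ → ℂ, Differentiable ℂ g ∧ ∀ z, f z = (∏ a ∈ s, (z - a)) * g z := by
  classical
  induction s using Finset.induction_on with
  | empty => intro f hf _; exact ⟨f, hf, by simp⟩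
  | insert a s ha ih =>
    intro f hf h0
    have hd : Differentiable ℂ (dslope f a) := by
      have := (Complex.differentiableOn_dslope (f := f) (s := Set.univ) (c := a)
        Filter.univ_mem).2 hf.differentiableOn
      exact differentiableOn_univ.1 this
    have hfa : ∀ z, f z = (z - a) * dslope f a z := by
      intro z
      have := sub_smul_dslope f a z
      rw [h0 a (Finset.mem_insert_self _ _), sub_zero, smul_eq_mul] at this
      exact this.symm
    obtain ⟨g, hg, hfg⟩ := ih (dslope f a) hd (by
      intro b hb
      have h1 := hfa b
      rw [h0 b (Finset.mem_insert_of_mem hb)] at h1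
      have hne : b - a ≠ 0 := sub_ne_zero.2 (by rintro rfl; exact ha hb)
      exact (mul_eq_zero.1 h1.symm).resolve_left hne)
    refine ⟨g, hg, fun z => ?_⟩
    rw [hfa z, hfg z, Finset.prod_insert ha, mul_assoc]

theorem aux_schwarz (s : Finset ℂ) (f : ℂ → ℂ) (hf : Differentiable ℂ f) (r B : ℝ) (hr : 0 < r)
    (hs : ∀ a ∈ s, ‖a‖ ≤ r) (h0 : ∀ a ∈ s, f a = 0) (hB : ∀ z, ‖z‖ = 5 * r → ‖f z‖ ≤ B)
    (w : ℂ) (hw : ‖w‖ ≤ r) : ‖f w‖ * 2 ^ s.card ≤ B := by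
  obtain ⟨g, hg, hfg⟩ := aux_factor s f hf h0
  have hgb : ‖g w‖ ≤ B / (4 * r) ^ s.card := by
    refine Complex.norm_le_of_forall_mem_frontier_norm_le (U := Metric.ball 0 (5 * r))
      Metric.isBounded_ball hg.diffContOnCl ?_ (subset_closure ?_)
    · intro z hz
      rw [frontier_ball _ (by positivity)] at hz
      have hz' : ‖z‖ = 5 * r := by simpa using hz
      have h1 := hB z hz'
      rw [hfg z, norm_mul, norm_prod] at h1
      have h2 : (4 * r) ^ s.card ≤ ∏ a ∈ s, ‖z - a‖ := by
        rw [← Finset.prod_const]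
        refine Finset.prod_le_prod (fun _ _ => by positivity) fun a ha => ?_
        have := norm_sub_norm_le z a
        have := hs a ha
        linarith
      rw [le_div_iff₀ (by positivity), mul_comm]
      exact (mul_le_mul_of_nonneg_right h2 (norm_nonneg _)).trans h1
    · simp only [Metric.mem_ball, dist_zero_right]; linarith
  have h2 : ∏ a ∈ s, ‖w - a‖ ≤ (2 * r) ^ s.card := by
    rw [← Finset.prod_const]
    refine Finset.prod_le_prod (fun _ _ => by positivity) fun a ha => ?_
    have := norm_sub_le w a
    have := hs a ha
    linarith
  rw [hfg w, norm_mul, norm_prod]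
  rw [le_div_iff₀ (by positivity)] at hgb
  calc (∏ a ∈ s, ‖w - a‖) * ‖g w‖ * 2 ^ s.card ≤ (2 * r) ^ s.card * ‖g w‖ * 2 ^ s.card := by gcongr
    _ = ‖g w‖ * (4 * r) ^ s.card := by
      rw [show 4 * r = (2 * r) * 2 by ring, mul_pow (2 * r) 2]; ring
    _ ≤ B := hgb

open NumberField in
theorem aux_siegel (K : Type*) [Field K] [NumberField K] : ∃ C : ℝ, 1 ≤ C ∧
    ∀ (M L : ℕ), 0 < M → L ^ 2 = 2 * M ^ 3 →
    ∀ (a : Matrix (Fin 3 → Fin M) (Fin L × Fin L) (𝓞 K)) (A : ℝ), 1 ≤ A →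
      (∀ k l, house ((a k l : 𝓞 K) : K) ≤ A) →
      ∃ ξ : Fin L × Fin L → 𝓞 K, ξ ≠ 0 ∧ a.mulVec ξ = 0 ∧
        ∀ l, house ((ξ l : 𝓞 K) : K) ≤ C * (L : ℝ) ^ 2 * A := by
  classical
  have key : ∃ c : ℝ, ∀ (M L : ℕ), 0 < M → L ^ 2 = 2 * M ^ 3 →
    ∀ (a : Matrix (Fin 3 → Fin M) (Fin L × Fin L) (𝓞 K)) (A : ℝ), a ≠ 0 →
      (∀ k l, house ((a k l : 𝓞 K) : K) ≤ A) →
      ∃ ξ : Fin L × Fin L → 𝓞 K, ξ ≠ 0 ∧ a.mulVec ξ = 0 ∧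
        ∀ l, house ((ξ l : 𝓞 K) : K) ≤
          c * ((c * (2 * M ^ 3 : ℕ) * A) ^ (((M ^ 3 : ℕ) : ℝ) / ((2 * M ^ 3 : ℕ) - (M ^ 3 : ℕ)))) := by
    refine ⟨?c, fun M L hM hL a A ha h => ?_⟩
    rotate_left
    have h3 : 0 < M ^ 3 := by positivity
    exact house.exists_ne_zero_int_vec_house_le K a ha (q := 2 * M ^ 3) h3 (by omega)
      (by simp [← hL, sq]) h (by simp)
  obtain ⟨c, hc⟩ := key
  refine ⟨1 + c ^ 2, by nlinarith [sq_nonneg c], fun M L hM hL a A hA h => ?_⟩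
  have hL' : (L : ℝ) ^ 2 = 2 * (M : ℝ) ^ 3 := by exact_mod_cast hL
  have hM' : (1 : ℝ) ≤ M := by exact_mod_cast hM
  have hM3 : (1 : ℝ) ≤ (M : ℝ) ^ 3 := one_le_pow₀ hM'
  by_cases ha : a = 0
  · have hLpos : 0 < L := by
      rcases Nat.eq_zero_or_pos L with h0 | h0
      · subst h0; have : 0 < M ^ 3 := by positivity
        omega
      · exact h0
    refine ⟨fun _ => 1, fun h => one_ne_zero (congrFun h (⟨0, hLpos⟩, ⟨0, hLpos⟩)), by simp [ha], ?_⟩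
    intro l
    have : house ((1 : 𝓞 K) : K) = 1 := by simpa using house_intCast (K := K) 1
    rw [this, hL']
    have h1 : 1 ≤ (1 + c ^ 2) := by nlinarith [sq_nonneg c]
    exact one_le_mul_of_one_le_of_one_le (one_le_mul_of_one_le_of_one_le h1 (by linarith)) hA
  · obtain ⟨ξ, h1, h2, h3⟩ := hc M L hM hL a A ha h
    refine ⟨ξ, h1, h2, fun l => (h3 l).trans ?_⟩
    have he : (((M ^ 3 : ℕ) : ℝ) / ((2 * M ^ 3 : ℕ) - (M ^ 3 : ℕ))) = 1 := by
      push_cast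
      rw [div_eq_one_iff_eq] <;> nlinarith
    rw [he, Real.rpow_one, hL']
    push_cast
    have : 0 ≤ 2 * (M : ℝ) ^ 3 * A := by positivity
    nlinarith

open NumberField in
theorem aux_liouville {K : Type*} [Field K] [NumberField K] (φ : K →+* ℂ) (x : 𝓞 K) (hx : x ≠ 0)
    (B : ℝ) (hB : 1 ≤ B) (h : house (x : K) ≤ B) : 1 ≤ ‖φ x‖ * B ^ Module.finrank ℚ K := by
  have h1 : 1 ≤ ‖Algebra.norm ℚ (x : K)‖ := by
    rw [← Algebra.coe_norm_int]
    have : Algebra.norm ℤ x ≠ 0 := Algebra.norm_ne_zero_iff.2 hx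
    rw [← Rat.norm_cast_real]
    have h2 := Int.one_le_abs this
    simp only [Rat.cast_intCast, Real.norm_eq_abs]
    exact_mod_cast h2
  refine (h1.trans (norm_norm_le_norm_mul_house_pow _ φ)).trans ?_
  gcongr
  calc house (x : K) ^ (Module.finrank ℚ K - 1) ≤ B ^ (Module.finrank ℚ K - 1) := by
        gcongr; exact house_nonneg _
    _ ≤ _ := pow_le_pow_right₀ hB (Nat.sub_le _ _)

open NumberField in
theorem aux_house_one {K : Type*} [Field K] [NumberField K] : house (1 : K) = 1 := by
  simpa using house_intCast (K := K) 1

open NumberField in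
theorem aux_house_prod {K : Type*} [Field K] [NumberField K] (P : Fin 3 → 𝓞 K) (H : ℝ) (hH : 1 ≤ H)
    (hP : ∀ i, house (P i : K) ≤ H) (t : Fin 3 → ℕ) (S : ℕ) (ht : ∀ i, t i ≤ S) (e : ℕ) :
    house (((∏ i, P i ^ t i) ^ e : 𝓞 K) : K) ≤ (H ^ (3 * S)) ^ e := by
  have h0 : ∀ i, house ((P i : K) ^ t i) ≤ H ^ S := fun i =>
    (house_pow_le _ _).trans ((pow_le_pow_left₀ (house_nonneg _) (hP i) _).trans
      (pow_le_pow_right₀ hH (ht i)))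
  push_cast
  refine (house_pow_le _ _).trans (pow_le_pow_left₀ (house_nonneg _) ?_ _)
  rw [Fin.prod_univ_three]
  calc _ ≤ H ^ S * H ^ S * H ^ S :=
        (house_mul_le _ _).trans (mul_le_mul ((house_mul_le _ _).trans
          (mul_le_mul (h0 0) (h0 1) (house_nonneg _) (by positivity))) (h0 2) (house_nonneg _)
            (by positivity))
    _ = _ := by ring

open NumberField in
/-- The matrix entries. -/
noncomputable def auxTerm {K : Type*} [Field K] (P W D : Fin 3 → 𝓞 K) (L : ℕ)
    (t : Fin 3 → ℕ) (l : Fin L × Fin L) : 𝓞 K :=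
  (∏ i, P i ^ t i) ^ (l.1 : ℕ) * (∏ i, W i ^ t i) ^ (l.2 : ℕ) * (∏ i, D i ^ t i) ^ (L - (l.2 : ℕ))

open NumberField in
theorem auxTerm_house {K : Type*} [Field K] [NumberField K] (P W D : Fin 3 → 𝓞 K) (L : ℕ)
    (t : Fin 3 → ℕ) (l : Fin L × Fin L) (H : ℝ) (hH : 1 ≤ H)
    (hP : ∀ i, house (P i : K) ≤ H) (hW : ∀ i, house (W i : K) ≤ H) (hD : ∀ i, house (D i : K) ≤ H)
    (S : ℕ) (ht : ∀ i, t i ≤ S) : house (auxTerm P W D L t l : K) ≤ H ^ (6 * (S * L)) := by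
  have h1 := aux_house_prod P H hH hP t S ht l.1
  have h2 := aux_house_prod W H hH hW t S ht l.2
  have h3 := aux_house_prod D H hH hD t S ht (L - l.2)
  have hH0 : 0 ≤ H := by linarith
  unfold auxTerm
  have e : ∀ a b c : 𝓞 K, ((a * b * c : 𝓞 K) : K) = (a : K) * (b : K) * (c : K) :=
    fun _ _ _ => rfl
  rw [e]
  calc _ ≤ (H ^ (3 * S)) ^ (l.1 : ℕ) * (H ^ (3 * S)) ^ (l.2 : ℕ) * (H ^ (3 * S)) ^ (L - (l.2 : ℕ)) :=
        (house_mul_le _ _).trans (mul_le_mul ((house_mul_le _ _).trans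
          (mul_le_mul h1 h2 (house_nonneg _) (by positivity))) h3 (house_nonneg _)
            (by positivity))
    _ = H ^ (3 * S * (l.1 + l.2 + (L - l.2))) := by rw [← pow_add, ← pow_add, ← pow_mul]
    _ ≤ _ := by
      apply pow_le_pow_right₀ hH
      have e1 : (l.1 : ℕ) + l.2 + (L - l.2) ≤ 2 * L := by omega
      calc _ ≤ 3 * S * (2 * L) := Nat.mul_le_mul_left _ e1
        _ = _ := by ring

open NumberField in
theorem auxTerm_map {K : Type*} [Field K] [NumberField K] (φ : K →+* ℂ) (c : ℂ) (x : Fin 3 → ℂ)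
    (P W D : Fin 3 → 𝓞 K) (hP : ∀ i, φ (P i) = Complex.exp (x i))
    (hW : ∀ i, φ (W i) = φ (D i) * Complex.exp (c * x i)) (L : ℕ)
    (t : Fin 3 → ℕ) (l : Fin L × Fin L) :
    φ (auxTerm P W D L t l) = (∏ i, φ (D i) ^ t i) ^ L *
      Complex.exp (((l.1 : ℕ) + (l.2 : ℕ) * c) * ∑ i, t i * x i) := by
  unfold auxTerm
  simp only [map_mul, map_pow, map_prod, hP, hW, mul_pow, Finset.prod_mul_distrib]
  have e1 : ∏ i, Complex.exp (x i) ^ t i = Complex.exp (∑ i, t i * x i) := by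
    rw [Complex.exp_sum]; simp [← Complex.exp_nat_mul]
  have e2 : ∏ i, Complex.exp (c * x i) ^ t i = Complex.exp (c * ∑ i, t i * x i) := by
    rw [Finset.mul_sum, Complex.exp_sum]
    refine Finset.prod_congr rfl fun i _ => ?_
    rw [← Complex.exp_nat_mul]; ring_nf
  rw [e1, e2, ← Complex.exp_nat_mul, ← Complex.exp_nat_mul]
  have e3 : (∏ i, φ (D i) ^ t i) ^ L = (∏ i, φ (D i) ^ t i) ^ (l.2 : ℕ) *
      (∏ i, φ (D i) ^ t i) ^ (L - (l.2 : ℕ)) := by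
    rw [← pow_add]; congr 1; omega
  rw [e3, show ((l.1 : ℕ) + (l.2 : ℕ) * c) * ∑ i, t i * x i = (l.1 : ℕ) * (∑ i, t i * x i)
    + (l.2 : ℕ) * (c * ∑ i, t i * x i) by ring, Complex.exp_add]
  ring

/-- Purely numerical end of the argument. -/
theorem aux_numeric (C H G v : ℝ) (d L M S m : ℕ) (hC : 1 ≤ C) (hH : 1 ≤ H) (hG : 1 ≤ G)
    (hm : 0 < m) (hM : M = 2 * m ^ 2) (hL : L = 4 * m ^ 3) (hS : M ≤ S) (hv : 0 ≤ v)
    (hE : (16 * C * H ^ 12 * G) ^ (d + 1) < 2 ^ m)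
    (h1 : v * 2 ^ (S ^ 3) ≤ H ^ (3 * (S * L)) * (L ^ 2 * (C * L ^ 2 * H ^ (6 * (M * L)) * G ^ (S * L))))
    (h2 : 1 ≤ v * (L ^ 2 * (C * L ^ 2 * H ^ (6 * (M * L)) * H ^ (6 * (S * L)))) ^ d) : False := by
  have hm0 : 0 < m ^ 3 := by positivity
  have hm2 : 0 < m ^ 2 := by positivity
  have hL1 : 1 ≤ L := by omega
  have hS1 : 1 ≤ S := by omega
  have hSL : 1 ≤ S * L := Nat.mul_pos hS1 hL1
  have hH0 : 0 < H := by linarith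
  have hG0 : 0 < G := by linarith
  have hC0 : 0 < C := by linarith
  set n := S * L with hn
  have hLn : L ≤ n := by rw [hn]; exact Nat.le_mul_of_pos_left _ hS1
  have hML : M * L ≤ n := Nat.mul_le_mul_right _ hS
  have hLr : (L : ℝ) ^ 2 * L ^ 2 ≤ 16 ^ n := by
    have : (L : ℝ) ≤ 2 ^ n := by
      have : L < 2 ^ L := Nat.lt_two_pow_self
      have h3 : 2 ^ L ≤ 2 ^ n := Nat.pow_le_pow_right (by norm_num) hLn
      exact_mod_cast (this.le.trans h3)
    calc (L : ℝ) ^ 2 * L ^ 2 = (L : ℝ) ^ 4 := by ring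
      _ ≤ (2 ^ n) ^ 4 := by gcongr
      _ = 16 ^ n := by rw [← pow_mul, mul_comm, pow_mul]; norm_num
  have hCn : C ≤ C ^ n := le_self_pow₀ hC (by omega)
  have hHM : H ^ (6 * (M * L)) ≤ H ^ (6 * n) := pow_le_pow_right₀ hH (by omega)
  have hGn : 1 ≤ G ^ n := one_le_pow₀ hG
  set E := 16 * C * H ^ 12 * G with hEdef
  have hEn : E ^ n = 16 ^ n * C ^ n * H ^ (12 * n) * G ^ n := by
    rw [hEdef, mul_pow, mul_pow, mul_pow, ← pow_mul]
  have hE0 : 0 < E := by positivity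
  have b1 : H ^ (3 * n) * (L ^ 2 * (C * L ^ 2 * H ^ (6 * (M * L)) * G ^ n)) ≤ E ^ n := by
    calc _ = ((L : ℝ) ^ 2 * L ^ 2) * C * (H ^ (3 * n) * H ^ (6 * (M * L))) * G ^ n := by ring
      _ ≤ 16 ^ n * C ^ n * (H ^ (3 * n) * H ^ (6 * n)) * G ^ n := by gcongr
      _ ≤ 16 ^ n * C ^ n * H ^ (12 * n) * G ^ n := by
        rw [← pow_add]
        gcongr
        omega
      _ = _ := hEn.symm
  have b2 : (L : ℝ) ^ 2 * (C * L ^ 2 * H ^ (6 * (M * L)) * H ^ (6 * n)) ≤ E ^ n := by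
    calc _ = ((L : ℝ) ^ 2 * L ^ 2) * C * (H ^ (6 * (M * L)) * H ^ (6 * n)) * 1 := by ring
      _ ≤ 16 ^ n * C ^ n * (H ^ (6 * n) * H ^ (6 * n)) * G ^ n := by gcongr
      _ = 16 ^ n * C ^ n * H ^ (12 * n) * G ^ n := by ring
      _ = _ := hEn.symm
  have b3 : 1 ≤ v * (E ^ n) ^ d := h2.trans (by gcongr)
  have b4 : (2 : ℝ) ^ (S ^ 3) ≤ (E ^ (d + 1)) ^ n := by
    calc (2 : ℝ) ^ (S ^ 3) = 1 * 2 ^ (S ^ 3) := by ring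
      _ ≤ (v * (E ^ n) ^ d) * 2 ^ (S ^ 3) := by gcongr
      _ = (v * 2 ^ (S ^ 3)) * (E ^ n) ^ d := by ring
      _ ≤ E ^ n * (E ^ n) ^ d := by gcongr; exact h1.trans b1
      _ = _ := by ring
  have b5 : (E ^ (d + 1)) ^ n < (2 ^ m) ^ n := pow_lt_pow_left₀ hE (by positivity) (by omega)
  rw [← pow_mul 2 m n] at b5
  have b6 : m * n ≤ S ^ 3 := by
    have : m * L ≤ S * S := by
      calc m * L = M * M := by rw [hM, hL]; ring
        _ ≤ S * S := Nat.mul_le_mul hS hS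
    calc m * n = S * (m * L) := by rw [hn]; ring
      _ ≤ S * (S * S) := Nat.mul_le_mul_left _ this
      _ = _ := by ring
  have b7 : (2 : ℝ) ^ (m * n) ≤ 2 ^ (S ^ 3) := pow_le_pow_right₀ (by norm_num) b6
  linarith

open NumberField in
theorem aux_main {K : Type*} [Field K] [NumberField K] (φ : K →+* ℂ) (c : ℂ) (x : Fin 3 → ℂ)
    (hinj : Function.Injective (fun t : Fin 3 → ℕ => ∑ i, (t i : ℂ) * x i))
    (P W D : Fin 3 → 𝓞 K) (hP : ∀ i, φ (P i) = Complex.exp (x i))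
    (hW : ∀ i, φ (W i) = φ (D i) * Complex.exp (c * x i)) (hDne : ∀ i, φ (D i) ≠ 0) :
    ∃ (L : ℕ) (ξ : Fin L × Fin L → 𝓞 K), ξ ≠ 0 ∧
      ∀ t : Fin 3 → ℕ, ∑ l, auxTerm P W D L t l * ξ l = 0 := by
  classical
  obtain ⟨C, hC, hsieg⟩ := aux_siegel K
  obtain ⟨H, hH, hHP, hHW, hHD⟩ : ∃ H : ℝ, 1 ≤ H ∧ (∀ i, house (P i : K) ≤ H) ∧
      (∀ i, house (W i : K) ≤ H) ∧ (∀ i, house (D i : K) ≤ H) := by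
    have hn := fun y : K => house_nonneg y
    refine ⟨1 + ∑ i, (house (P i : K) + house (W i : K) + house (D i : K)), ?_, ?_, ?_, ?_⟩
    · have : 0 ≤ ∑ i, (house (P i : K) + house (W i : K) + house (D i : K)) :=
        Finset.sum_nonneg fun i _ => by linarith [hn (P i), hn (W i), hn (D i)]
      linarith
    all_goals
      intro i
      have := Finset.single_le_sum (f := fun i => house (P i : K) + house (W i : K) + house (D i : K))
        (fun i _ => by linarith [hn (P i), hn (W i), hn (D i)]) (Finset.mem_univ i)
      linarith [hn (P i), hn (W i), hn (D i)]
  have hH0 : 0 < H := by linarith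
  set Λ : ℝ := 1 + ∑ i, ‖x i‖ with hΛ
  have hΛ0 : 0 < Λ := by
    have : 0 ≤ ∑ i, ‖x i‖ := Finset.sum_nonneg fun i _ => norm_nonneg _
    linarith
  have hz : ∀ (t : Fin 3 → ℕ) (S : ℕ), (∀ i, t i ≤ S) → ‖∑ i, (t i : ℂ) * x i‖ ≤ S * Λ := by
    intro t S ht
    calc _ ≤ ∑ i, ‖(t i : ℂ) * x i‖ := norm_sum_le _ _
      _ ≤ ∑ i, (S : ℝ) * ‖x i‖ := by
        refine Finset.sum_le_sum fun i _ => ?_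
        rw [norm_mul, Complex.norm_natCast]
        have : (t i : ℝ) ≤ S := by exact_mod_cast ht i
        gcongr
      _ = S * ∑ i, ‖x i‖ := by rw [Finset.mul_sum]
      _ ≤ S * Λ := by gcongr; linarith
  set G : ℝ := Real.exp ((1 + ‖c‖) * (5 * Λ)) with hG
  have hG1 : 1 ≤ G := Real.one_le_exp (by positivity)
  set d := Module.finrank ℚ K with hd
  obtain ⟨m, hm⟩ := pow_unbounded_of_one_lt ((16 * C * H ^ 12 * G) ^ (d + 1)) (one_lt_two (α := ℝ))
  have hm0 : 0 < m := by
    rcases Nat.eq_zero_or_pos m with h0 | h0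
    · exfalso
      rw [h0, pow_zero] at hm
      have hC0 : 0 < C := by linarith
      have e1 : 1 ≤ 16 * C := by linarith
      have : 1 ≤ 16 * C * H ^ 12 * G :=
        one_le_mul_of_one_le_of_one_le (one_le_mul_of_one_le_of_one_le e1 (one_le_pow₀ hH)) hG1
      exact absurd hm (not_lt.2 (one_le_pow₀ this))
    · exact h0
  obtain ⟨M, hM⟩ : ∃ M, M = 2 * m ^ 2 := ⟨_, rfl⟩
  obtain ⟨L, hL⟩ : ∃ L, L = 4 * m ^ 3 := ⟨_, rfl⟩
  have hM0 : 0 < M := by rw [hM]; positivity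
  obtain ⟨ξ, hξ0, hξ, hξb⟩ := hsieg M L hM0 (by rw [hM, hL]; ring)
    (fun t l => auxTerm P W D L (fun i => (t i : ℕ)) l) (H ^ (6 * (M * L))) (one_le_pow₀ hH)
    (fun t l => auxTerm_house P W D L _ l H hH hHP hHW hHD M fun i => (t i).2.le)
  refine ⟨L, ξ, hξ0, ?_⟩
  set B := C * (L : ℝ) ^ 2 * H ^ (6 * (M * L)) with hB
  have hB0 : 0 ≤ B := by positivity
  set F : ℂ → ℂ := fun z => ∑ l : Fin L × Fin L,
    Complex.exp (((l.1 : ℕ) + (l.2 : ℕ) * c) * z) * φ (ξ l) with hF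
  have hFd : Differentiable ℂ F := by
    rw [hF]; fun_prop
  have hFV : ∀ t : Fin 3 → ℕ, φ ((∑ l, auxTerm P W D L t l * ξ l : 𝓞 K) : K) =
      (∏ i, φ (D i) ^ t i) ^ L * F (∑ i, t i * x i) := by
    intro t
    simp only [map_sum, map_mul, auxTerm_map φ c x P W D hP hW, hF, Finset.mul_sum, mul_assoc]
  -- the induction
  suffices hind : ∀ S : ℕ, M ≤ S → ∀ t : Fin 3 → ℕ, (∀ i, t i < S) →
      ∑ l, auxTerm P W D L t l * ξ l = 0 by
    intro t
    refine hind (M + 1 + ∑ i, t i) (by omega) t fun i => ?_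
    have := Finset.single_le_sum (f := t) (fun i _ => Nat.zero_le _) (Finset.mem_univ i)
    omega
  intro S hS
  induction S, hS using Nat.le_induction with
  | base =>
    intro t ht
    have := congrFun hξ (fun i => ⟨t i, ht i⟩)
    simpa [Matrix.mulVec, dotProduct] using this
  | succ S hS ih =>
    intro t ht
    have ht' : ∀ i, t i ≤ S := fun i => Nat.lt_succ_iff.1 (ht i)
    by_contra hne
    have hS0 : 0 < S := by omega
    have hSr : (0 : ℝ) < S := by exact_mod_cast hS0
    -- zeros of `F`
    let s : Finset ℂ := (Finset.univ : Finset (Fin 3 → Fin S)).image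
      (fun u => ∑ i, ((u i : ℕ) : ℂ) * x i)
    have hscard : s.card = S ^ 3 := by
      rw [Finset.card_image_of_injective]
      · simp
      · intro u v huv
        have := hinj (a₁ := fun i => (u i : ℕ)) (a₂ := fun i => (v i : ℕ)) huv
        funext i
        exact Fin.ext (congrFun this i)
    have hs0 : ∀ a ∈ s, F a = 0 := by
      intro a ha
      obtain ⟨u, -, rfl⟩ := Finset.mem_image.1 ha
      have h1 := hFV (fun i => (u i : ℕ))
      rw [ih (fun i => (u i : ℕ)) (fun i => (u i).2)] at h1
      simp only [map_zero] at h1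
      refine (mul_eq_zero.1 h1.symm).resolve_left (pow_ne_zero _ (Finset.prod_ne_zero_iff.2 ?_))
      exact fun i _ => pow_ne_zero _ (hDne i)
    have hsr : ∀ a ∈ s, ‖a‖ ≤ S * Λ := by
      intro a ha
      obtain ⟨u, -, rfl⟩ := Finset.mem_image.1 ha
      exact hz (fun i => (u i : ℕ)) S (fun i => (u i).2.le)
    have hFb : ∀ z, ‖z‖ = 5 * (S * Λ) → ‖F z‖ ≤ L ^ 2 * (B * G ^ (S * L)) := by
      intro z hzn
      have : ∀ l : Fin L × Fin L, ‖Complex.exp (((l.1 : ℕ) + (l.2 : ℕ) * c) * z) * φ (ξ l)‖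
          ≤ B * G ^ (S * L) := by
        intro l
        rw [norm_mul, mul_comm]
        refine mul_le_mul ((norm_embedding_le_house _ φ).trans (hξb l)) ?_ (norm_nonneg _) hB0
        refine (Complex.norm_exp_le_exp_norm _).trans ?_
        rw [hG, ← Real.exp_nat_mul]
        apply Real.exp_le_exp.2
        rw [norm_mul, hzn]
        have hl1 : ((l.1 : ℕ) : ℝ) ≤ L := by exact_mod_cast l.1.2.le
        have hl2 : ((l.2 : ℕ) : ℝ) ≤ L := by exact_mod_cast l.2.2.le
        have h1 : ‖((l.1 : ℕ) : ℂ) + ((l.2 : ℕ) : ℂ) * c‖ ≤ L * (1 + ‖c‖) := by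
          refine (norm_add_le _ _).trans ?_
          rw [norm_mul, Complex.norm_natCast, Complex.norm_natCast, mul_add, mul_one]
          gcongr
        calc _ ≤ L * (1 + ‖c‖) * (5 * (S * Λ)) := by gcongr
          _ = _ := by push_cast; ring
      calc ‖F z‖ ≤ ∑ l : Fin L × Fin L, B * G ^ (S * L) := norm_sum_le_of_le _ fun l _ => this l
        _ = _ := by simp [sq]
    have hsch := aux_schwarz s F hFd (S * Λ) _ (by positivity) hsr hs0 hFb
      (∑ i, t i * x i) (hz t S ht')
    rw [hscard] at hsch
    have hDb : ‖(∏ i, φ (D i) ^ t i) ^ L‖ ≤ H ^ (3 * (S * L)) := by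
      have h1 := aux_house_prod D H hH hHD t S ht' L
      have h2 := (norm_embedding_le_house _ φ).trans h1
      simp only [map_pow, map_prod] at h2
      rw [← pow_mul, mul_assoc] at h2
      simpa using h2
    have hVb : house ((∑ l, auxTerm P W D L t l * ξ l : 𝓞 K) : K) ≤
        L ^ 2 * (B * H ^ (6 * (S * L))) := by
      simp only [map_sum, map_mul]
      refine (house_sum_le_sum_house _ _).trans ?_
      calc _ ≤ ∑ l : Fin L × Fin L, B * H ^ (6 * (S * L)) := by
            refine Finset.sum_le_sum fun l _ => ?_
            refine (house_mul_le _ _).trans ?_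
            rw [mul_comm]
            exact mul_le_mul (hξb l) (auxTerm_house P W D L t l H hH hHP hHW hHD S ht')
              (house_nonneg _) hB0
        _ = _ := by simp [sq]
    have hL1 : 1 ≤ L := by rw [hL]; have : 0 < m ^ 3 := by positivity
                           omega
    have hLr : (1 : ℝ) ≤ L := by exact_mod_cast hL1
    have hone : (1 : ℝ) ≤ L ^ 2 * (B * H ^ (6 * (S * L))) := by
      have e1 : (1 : ℝ) ≤ (L : ℝ) ^ 2 := one_le_pow₀ hLr
      have e2 : (1 : ℝ) ≤ H ^ (6 * (M * L)) := one_le_pow₀ hH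
      have e3 : (1 : ℝ) ≤ H ^ (6 * (S * L)) := one_le_pow₀ hH
      exact one_le_mul_of_one_le_of_one_le e1 (one_le_mul_of_one_le_of_one_le
        (one_le_mul_of_one_le_of_one_le (one_le_mul_of_one_le_of_one_le hC e1) e2) e3)
    have hli := aux_liouville φ _ hne _ hone hVb
    refine aux_numeric C H G _ d L M S m hC hH hG1 hm0 hM hL hS (norm_nonneg _) hm ?_ hli
    rw [hFV, norm_mul, mul_assoc]
    exact mul_le_mul hDb hsch (by positivity) (by positivity)

theorem aux_inj (p : Fin 3 → ℕ) (hp : ∀ i, (p i).Prime) (hne : Function.Injective p) :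
    Function.Injective (fun t : Fin 3 → ℕ => ∑ i, (t i : ℂ) * (Real.log (p i) : ℂ)) := by
  intro t u htu
  simp only at htu
  have h1 : ∑ i, (t i : ℝ) * Real.log (p i) = ∑ i, (u i : ℝ) * Real.log (p i) := by
    exact_mod_cast htu
  have key : ∀ v : Fin 3 → ℕ, Real.exp (∑ i, (v i : ℝ) * Real.log (p i)) =
      ((∏ i, p i ^ v i : ℕ) : ℝ) := by
    intro v
    rw [Real.exp_sum]
    push_cast
    refine Finset.prod_congr rfl fun i _ => ?_
    rw [Real.exp_nat_mul, Real.exp_log (by exact_mod_cast (hp i).pos)]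
  have h2 : ∏ i, p i ^ t i = ∏ i, p i ^ u i := by
    have := congrArg Real.exp h1
    rw [key, key] at this
    exact_mod_cast this
  have hfac : ∀ (v : Fin 3 → ℕ) (j : Fin 3), (∏ i, p i ^ v i).factorization (p j) = v j := by
    intro v j
    rw [Nat.factorization_prod (fun i _ => pow_ne_zero _ (hp i).ne_zero)]
    simp only [Finsupp.coe_finsetSum, Finset.sum_apply, (hp _).factorization_pow]
    rw [Finset.sum_eq_single j]
    · simp
    · intro i _ hij
      exact Finsupp.single_eq_of_ne (fun h => hij (hne h).symm)
    · simp
  funext j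
  rw [← hfac t j, h2, hfac u j]

theorem aux_exp_inj (p : Fin 3 → ℕ) (hp : ∀ i, (p i).Prime) (hne : Function.Injective p)
    (μ ν : ℂ) (h : ∀ i, Complex.exp (μ * (Real.log (p i) : ℂ)) =
      Complex.exp (ν * (Real.log (p i) : ℂ))) : μ = ν := by
  have hlog : ∀ i, 0 < Real.log (p i) := fun i => Real.log_pos (by exact_mod_cast (hp i).one_lt)
  choose n hn using fun i => Complex.exp_eq_exp_iff_exists_int.1 (h i)
  by_contra hμν
  have hδ : μ - ν ≠ 0 := sub_ne_zero.2 hμν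
  have h1 : ∀ i, (μ - ν) * (Real.log (p i) : ℂ) = n i * (2 * Real.pi * Complex.I) := by
    intro i; linear_combination hn i
  have h2 : (n 1 : ℂ) * (Real.log (p 0) : ℂ) = n 0 * (Real.log (p 1) : ℂ) := by
    apply mul_left_cancel₀ hδ
    linear_combination (n 1 : ℂ) * h1 0 - (n 0 : ℂ) * h1 1
  have h3 : (n 1 : ℝ) * Real.log (p 0) = n 0 * Real.log (p 1) := by exact_mod_cast h2
  have h4 : ((n 1).natAbs : ℝ) * Real.log (p 0) = (n 0).natAbs * Real.log (p 1) := by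
    have := congrArg abs h3
    rw [abs_mul, abs_mul, abs_of_pos (hlog 0), abs_of_pos (hlog 1)] at this
    simpa [Nat.cast_natAbs] using this
  have h4' : ((n 1).natAbs : ℂ) * (Real.log (p 0) : ℂ) = (n 0).natAbs * (Real.log (p 1) : ℂ) := by
    exact_mod_cast h4
  have h5 := aux_inj p hp hne (a₁ := ![(n 1).natAbs, 0, 0]) (a₂ := ![0, (n 0).natAbs, 0])
    (by simpa [Fin.sum_univ_three] using h4')
  have h6 : (n 0).natAbs = 0 := by simpa using (congrFun h5 1).symm
  have h7 : n 0 = 0 := Int.natAbs_eq_zero.1 h6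
  have h8 := h1 0
  rw [h7, Int.cast_zero, zero_mul] at h8
  have h9 := (mul_eq_zero.1 h8).resolve_left hδ
  exact (hlog 0).ne' (by exact_mod_cast h9)

open NumberField in
theorem aux_final {K : Type*} [Field K] [NumberField K] (φ : K →+* ℂ) (c : ℂ)
    (p : Fin 3 → ℕ) (hp : ∀ i, (p i).Prime) (hne : Function.Injective p)
    (a : Fin 3 → K) (ha : ∀ i, φ (a i) = Complex.exp (c * (Real.log (p i) : ℂ))) :
    ∃ y : ℚ, c = (y : ℂ) := by
  classical
  have halg : ∀ i, IsAlgebraic ℤ (a i) := fun i =>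
    (IsFractionRing.isAlgebraic_iff ℤ ℚ K).2 (Algebra.IsAlgebraic.isAlgebraic (a i))
  choose D hD0 hDint using fun i => (halg i).exists_integral_multiple
  have hinj := aux_inj p hp hne
  obtain ⟨W, hW⟩ : ∃ W : Fin 3 → 𝓞 K, ∀ i, (W i : K) = D i • a i :=
    ⟨fun i => ⟨D i • a i, hDint i⟩, fun i => rfl⟩
  have hW' : ∀ i, φ (W i : K) = φ (((D i : ℤ) : 𝓞 K) : K) *
      Complex.exp (c * (Real.log (p i) : ℂ)) := by
    intro i
    rw [hW, zsmul_eq_mul, map_mul, ha]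
    simp
  have hP' : ∀ i, φ (((p i : ℕ) : 𝓞 K) : K) = Complex.exp (Real.log (p i) : ℂ) := by
    intro i
    rw [← Complex.ofReal_exp, Real.exp_log (by exact_mod_cast (hp i).pos)]
    simp
  obtain ⟨L, ξ, hξ0, hξ⟩ := aux_main φ c (fun i => (Real.log (p i) : ℂ)) hinj
    (fun i => ((p i : ℕ) : 𝓞 K)) W (fun i => ((D i : ℤ) : 𝓞 K)) hP' hW'
    (by intro i; simpa using hD0 i)
  by_contra hc
  push Not at hc
  -- the characters
  let χ : Fin L × Fin L → (Multiplicative (Fin 3 → ℕ) →* ℂ) := fun l =>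
    { toFun := fun t => Complex.exp (((l.1 : ℕ) + (l.2 : ℕ) * c) *
        ∑ i, ((Multiplicative.toAdd t i : ℕ) : ℂ) * (Real.log (p i) : ℂ))
      map_one' := by simp
      map_mul' := by
        intro s t
        rw [← Complex.exp_add, ← mul_add, ← Finset.sum_add_distrib]
        simp [add_mul] }
  have hχ : Function.Injective χ := by
    intro l l' hll
    have h1 : ((l.1 : ℕ) + (l.2 : ℕ) * c) = ((l'.1 : ℕ) + (l'.2 : ℕ) * c) := by
      refine aux_exp_inj p hp hne _ _ fun j => ?_
      have := DFunLike.congr_fun hll (Multiplicative.ofAdd (Pi.single j 1))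
      simpa [χ, Pi.single_apply, ite_mul] using this
    have h2 : (l.2 : ℕ) = l'.2 := by
      by_contra hb
      have hb' : ((l.2 : ℕ) : ℂ) - ((l'.2 : ℕ) : ℂ) ≠ 0 := sub_ne_zero.2 (by exact_mod_cast hb)
      refine hc ((((l'.1 : ℕ) : ℚ) - ((l.1 : ℕ) : ℚ)) / (((l.2 : ℕ) : ℚ) - ((l'.2 : ℕ) : ℚ))) ?_
      push_cast
      rw [eq_div_iff hb']
      linear_combination h1
    have h3 : (l.1 : ℕ) = l'.1 := by
      rw [h2] at h1
      exact_mod_cast add_right_cancel h1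
    exact Prod.ext (Fin.ext h3) (Fin.ext h2)
  have hli := (linearIndependent_monoidHom (Multiplicative (Fin 3 → ℕ)) ℂ).comp χ hχ
  rw [Fintype.linearIndependent_iff] at hli
  have hz := hli (fun l => φ (ξ l)) (by
    funext t
    have h1 := congrArg (fun y : 𝓞 K => φ (y : K)) (hξ (Multiplicative.toAdd t))
    simp only [map_sum, map_mul, map_zero] at h1
    simp only [Function.comp, Finset.sum_apply, Pi.smul_apply, smul_eq_mul, Pi.zero_apply]
    have hne0 : (∏ i, φ (((D i : ℤ) : 𝓞 K) : K) ^ (Multiplicative.toAdd t i)) ^ L ≠ 0 := by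
      refine pow_ne_zero _ (Finset.prod_ne_zero_iff.2 fun i _ => pow_ne_zero _ ?_)
      simpa using hD0 i
    apply mul_left_cancel₀ hne0
    rw [mul_zero, ← h1, Finset.mul_sum]
    refine Finset.sum_congr rfl fun l _ => ?_
    have e : φ (algebraMap (𝓞 K) K (auxTerm (fun i => ((p i : ℕ) : 𝓞 K)) W
        (fun i => ((D i : ℤ) : 𝓞 K)) L (Multiplicative.toAdd t) l)) = _ :=
      auxTerm_map φ c (fun i => (Real.log (p i) : ℂ)) _ _ _ hP' hW' L (Multiplicative.toAdd t) l
    rw [e]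
    simp only [χ, MonoidHom.coe_mk, OneHom.coe_mk]
    ring)
  apply hξ0
  funext l
  have := hz l
  simpa using this

/-- Corollary of the six exponentials theorem: if `c ∈ ℂ` is such that `p^c` is
algebraic over `ℚ` for at least three distinct primes `p`, then `c ∈ ℚ`. -/
theorem stmt_9 (c : ℂ)
    (h : ∃ p q r : ℕ, p.Prime ∧ q.Prime ∧ r.Prime ∧ p ≠ q ∧ q ≠ r ∧ p ≠ r ∧
      IsAlgebraic ℚ (Complex.exp (c * Real.log p)) ∧
      IsAlgebraic ℚ (Complex.exp (c * Real.log q)) ∧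
      IsAlgebraic ℚ (Complex.exp (c * Real.log r))) :
    ∃ x : ℚ, c = (x : ℂ) := by
  obtain ⟨p, q, r, hp, hq, hr, hpq, hqr, hpr, ha, hb, hc⟩ := h
  let P : Fin 3 → ℕ := ![p, q, r]
  have hP : ∀ i, (P i).Prime := by
    intro i; fin_cases i <;> simpa [P]
  have hinj : Function.Injective P := by
    intro i j hij
    fin_cases i <;> fin_cases j <;> simp_all [P]
  have halg : ∀ i, IsAlgebraic ℚ (Complex.exp (c * (Real.log (P i) : ℂ))) := by
    intro i; fin_cases i
    · exact ha
    · exact hb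
    · exact hc
  let S : Set ℂ := Set.range fun i => Complex.exp (c * (Real.log (P i) : ℂ))
  have hfd : FiniteDimensional ℚ (IntermediateField.adjoin ℚ S) := by
    have : Finite S := Set.finite_range _
    apply IntermediateField.finiteDimensional_adjoin
    rintro _ ⟨i, rfl⟩
    exact (halg i).isIntegral
  have : NumberField (IntermediateField.adjoin ℚ S) :=
    { to_charZero := inferInstance, to_finiteDimensional := hfd }
  exact aux_final (algebraMap (IntermediateField.adjoin ℚ S) ℂ) c P hP hinj
    (fun i => ⟨_, IntermediateField.subset_adjoin ℚ S ⟨i, rfl⟩⟩) (fun i => rfl)
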